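/- Let λ ⊢ n. The Specht module SP_λ, with the symmetric group S_n acting by permuting the variables of ℂ[x₁,…,x_n], is an irreducible representation: SP_λ ≠ 0, and the only S_n-invariant ℂ-linear subspaces of SP_λ are 0 and SP_λ itself. -/

import Mathlib

open scoped Classical

noncomputable section

open MvPolynomial

/-- The Specht polynomial of a bijective filling `T` of the cells of `lam` by `0,…,n-1`:
the product over all pairs of cells in the same column (the first strictly above the
second) of the differences of the corresponding variables — i.e. the product of the
column Vandermonde determinants. -/
noncomputable def spechtPoly (n : ℕ) (lam : YoungDiagram) (T : lam.cells ≃ Fin n) :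
    MvPolynomial (Fin n) ℂ :=
  ∏ p ∈ Finset.univ.filter
      (fun p : lam.cells × lam.cells =>
        (p.1 : ℕ × ℕ).2 = (p.2 : ℕ × ℕ).2 ∧ (p.1 : ℕ × ℕ).1 < (p.2 : ℕ × ℕ).1),
    (X (T p.1) - X (T p.2))

/-- The Specht module: the linear span of all Specht polynomials of shape `lam`. -/
noncomputable def spechtModule (n : ℕ) (lam : YoungDiagram) :
    Submodule ℂ (MvPolynomial (Fin n) ℂ) :=
  Submodule.span ℂ (Set.range (spechtPoly n lam))

lemma sp_irred {n : ℕ} {i j : Fin n} (h : i ≠ j) :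
    Irreducible (X i - X j : MvPolynomial (Fin n) ℂ) := by
  have hne : (X i - X j : MvPolynomial (Fin n) ℂ) ≠ 0 :=
    sub_ne_zero.2 (fun h' => h (X_injective h'))
  apply irreducible_of_totalDegree_eq_one
  · exact ((isHomogeneous_X ℂ i).sub (isHomogeneous_X ℂ j)).totalDegree hne
  · intro x hx
    rw [isUnit_iff_ne_zero]
    rintro rfl
    exact hne (by ext m; simpa using hx m)

lemma sp_not_dvd {n : ℕ} {i j k l : Fin n} (hkl : k ≠ l)
    (h : (k ≠ i ∧ k ≠ j) ∨ (l ≠ i ∧ l ≠ j)) :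
    ¬ (X i - X j : MvPolynomial (Fin n) ℂ) ∣ X k - X l := by
  rintro ⟨q, hq⟩
  rcases h with ⟨h1, h2⟩ | ⟨h1, h2⟩
  · have := congrArg (eval (fun t => if t = k then (1 : ℂ) else 0)) hq
    simp [h1.symm, h2.symm, hkl.symm] at this
  · have := congrArg (eval (fun t => if t = l then (1 : ℂ) else 0)) hq
    simp [h1.symm, h2.symm, hkl] at this

lemma sp_dvd {n : ℕ} {i j : Fin n} {f : MvPolynomial (Fin n) ℂ}
    (hf : rename (Equiv.swap i j) f = - f) : (X i - X j) ∣ f := by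
  set I := Ideal.span {(X i - X j : MvPolynomial (Fin n) ℂ)} with hI
  have hij : Ideal.Quotient.mkₐ ℂ I (X i) = Ideal.Quotient.mkₐ ℂ I (X j) := by
    simp only [Ideal.Quotient.mkₐ_eq_mk]
    rw [Ideal.Quotient.eq]
    exact Ideal.subset_span rfl
  have key : (Ideal.Quotient.mkₐ ℂ I).comp (rename (Equiv.swap i j)) =
      Ideal.Quotient.mkₐ ℂ I := by
    apply MvPolynomial.algHom_ext
    intro t
    simp only [AlgHom.comp_apply, rename_X]
    by_cases h1 : t = i
    · subst h1; simp [hij]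
    by_cases h2 : t = j
    · subst h2; simp [hij]
    rw [Equiv.swap_apply_of_ne_of_ne h1 h2]
  have := DFunLike.congr_fun key f
  rw [AlgHom.comp_apply, hf] at this
  simp only [Ideal.Quotient.mkₐ_eq_mk] at this
  rw [Ideal.Quotient.eq, Ideal.mem_span_singleton] at this
  have h2 := this.mul_left (C (-1/2))
  convert h2 using 1
  have : (C (-1/2) : MvPolynomial (Fin n) ℂ) * (-f - f) = (C (-1/2) * C (-2)) * f := by
    have : (C (-2) : MvPolynomial (Fin n) ℂ) = -2 := by
      rw [map_neg]; congr 1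
    rw [this]; ring
  rw [this, ← C_mul]; norm_num

/-- index pairs -/
def spPairs (lam : YoungDiagram) : Finset (lam.cells × lam.cells) :=
  Finset.univ.filter
      (fun p : lam.cells × lam.cells =>
        (p.1 : ℕ × ℕ).2 = (p.2 : ℕ × ℕ).2 ∧ (p.1 : ℕ × ℕ).1 < (p.2 : ℕ × ℕ).1)

lemma spechtPoly_eq (n : ℕ) (lam : YoungDiagram) (T : lam.cells ≃ Fin n) :
    spechtPoly n lam T = ∏ p ∈ spPairs lam, (X (T p.1) - X (T p.2)) := rfl

lemma spPairs_ne {lam : YoungDiagram} {p : lam.cells × lam.cells} (hp : p ∈ spPairs lam) :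
    p.1 ≠ p.2 := by
  intro h
  simp only [spPairs, Finset.mem_filter] at hp
  rw [h] at hp
  exact lt_irrefl _ hp.2.2

lemma spechtPoly_ne_zero (n : ℕ) (lam : YoungDiagram) (T : lam.cells ≃ Fin n) :
    spechtPoly n lam T ≠ 0 := by
  rw [spechtPoly_eq, Finset.prod_ne_zero_iff]
  intro p hp
  exact (sp_irred (fun h => spPairs_ne hp (T.injective h))).ne_zero

lemma spechtPoly_homog (n : ℕ) (lam : YoungDiagram) (T : lam.cells ≃ Fin n) :
    (spechtPoly n lam T).IsHomogeneous (spPairs lam).card := by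
  rw [spechtPoly_eq, Finset.card_eq_sum_ones]
  exact IsHomogeneous.prod _ _ _ fun p _ => (isHomogeneous_X ℂ _).sub (isHomogeneous_X ℂ _)

lemma spechtPoly_rename (n : ℕ) (lam : YoungDiagram) (T : lam.cells ≃ Fin n)
    (g : Equiv.Perm (Fin n)) :
    rename g (spechtPoly n lam T) = spechtPoly n lam (T.trans g) := by
  simp [spechtPoly_eq, map_prod]

lemma spechtPoly_dvd (n : ℕ) (lam : YoungDiagram) (T : lam.cells ≃ Fin n)
    (f : MvPolynomial (Fin n) ℂ)
    (hf : ∀ a b : lam.cells, (a : ℕ × ℕ).2 = (b : ℕ × ℕ).2 → a ≠ b →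
      rename (Equiv.swap (T a) (T b)) f = - f) : spechtPoly n lam T ∣ f := by
  rw [spechtPoly_eq]
  apply Finset.prod_dvd_of_isRelPrime
  · intro p hp q hq hpq
    have hp1 : T p.1 ≠ T p.2 := fun h => spPairs_ne hp (T.injective h)
    have hq1 : T q.1 ≠ T q.2 := fun h => spPairs_ne hq (T.injective h)
    apply (sp_irred hp1).isRelPrime_iff_not_dvd.2
    apply sp_not_dvd hq1
    by_contra hcon
    simp only [ne_eq, T.injective.eq_iff] at hcon
    have hne := spPairs_ne hp
    have hne' := spPairs_ne hq
    have hp2 := hp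
    have hq2 := hq
    simp only [spPairs, Finset.coe_filter, Set.mem_ofPred_eq] at hp2 hq2
    obtain ⟨p1, p2⟩ := p
    obtain ⟨q1, q2⟩ := q
    simp only at *
    have : (q1 = p1 ∧ q2 = p2) ∨ (q1 = p2 ∧ q2 = p1) := by
      have h1 : q1 = p1 ∨ q1 = p2 := by tauto
      have h2 : q2 = p1 ∨ q2 = p2 := by tauto
      rcases h1 with h1 | h1 <;> rcases h2 with h2 | h2
      · exact absurd (h1.trans h2.symm) hne'
      · exact Or.inl ⟨h1, h2⟩
      · exact Or.inr ⟨h1, h2⟩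
      · exact absurd (h1.trans h2.symm) hne'
    rcases this with ⟨rfl, rfl⟩ | ⟨rfl, rfl⟩
    · exact hpq rfl
    · exact lt_asymm hp2.2.2 hq2.2.2
  · intro p hp
    apply sp_dvd
    apply hf _ _ _ (spPairs_ne hp)
    simp only [spPairs, Finset.mem_filter] at hp
    exact hp.2.1

lemma spechtPoly_mult (n : ℕ) (lam : YoungDiagram) (T : lam.cells ≃ Fin n)
    (f : MvPolynomial (Fin n) ℂ) (hh : f.IsHomogeneous (spPairs lam).card)
    (hf : ∀ a b : lam.cells, (a : ℕ × ℕ).2 = (b : ℕ × ℕ).2 → a ≠ b →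
      rename (Equiv.swap (T a) (T b)) f = - f) : ∃ c : ℂ, f = c • spechtPoly n lam T := by
  by_cases h0 : f = 0
  · exact ⟨0, by simp [h0]⟩
  obtain ⟨q, hq⟩ := spechtPoly_dvd n lam T f hf
  have hq0 : q ≠ 0 := by rintro rfl; simp at hq; exact h0 hq
  have hd := hh.totalDegree h0
  have hs := spechtPoly_ne_zero n lam T
  rw [hq, totalDegree_mul_of_isDomain hs hq0,
    (spechtPoly_homog n lam T).totalDegree hs] at hd
  have : q.totalDegree = 0 := by omega
  rw [totalDegree_eq_zero_iff_eq_C] at this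
  refine ⟨coeff 0 q, ?_⟩
  rw [hq, this, mul_comm, smul_eq_C_mul]
  simp

/-- column group -/
def spCol (n : ℕ) (lam : YoungDiagram) (T : lam.cells ≃ Fin n) :
    Subgroup (Equiv.Perm (Fin n)) where
  carrier := {g | ∀ i, (T.symm (g i) : ℕ × ℕ).2 = (T.symm i : ℕ × ℕ).2}
  one_mem' := fun i => rfl
  mul_mem' := fun {a b} ha hb i => (ha (b i)).trans (hb i)
  inv_mem' := fun {a} ha i => by
    have := ha (a⁻¹ i)
    simpa using this.symm

/-- column antisymmetrizer -/
def spAnti (n : ℕ) (lam : YoungDiagram) (T : lam.cells ≃ Fin n)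
    (f : MvPolynomial (Fin n) ℂ) : MvPolynomial (Fin n) ℂ :=
  ∑ g : spCol n lam T, ((Equiv.Perm.sign (g : Equiv.Perm (Fin n)) : ℤ) : ℂ) •
    rename (g : Equiv.Perm (Fin n)) f

lemma spAnti_homog (n : ℕ) (lam : YoungDiagram) (T : lam.cells ≃ Fin n)
    (f : MvPolynomial (Fin n) ℂ) (d : ℕ) (hf : f.IsHomogeneous d) :
    (spAnti n lam T f).IsHomogeneous d := by
  apply IsHomogeneous.sum
  intro g _
  rw [smul_eq_C_mul]
  exact hf.rename_isHomogeneous.C_mul _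

lemma spAnti_swap (n : ℕ) (lam : YoungDiagram) (T : lam.cells ≃ Fin n)
    (f : MvPolynomial (Fin n) ℂ) (a b : lam.cells) (hab : (a : ℕ × ℕ).2 = (b : ℕ × ℕ).2)
    (hne : a ≠ b) :
    rename (Equiv.swap (T a) (T b)) (spAnti n lam T f) = - spAnti n lam T f := by
  have hs : Equiv.swap (T a) (T b) ∈ spCol n lam T := by
    intro i
    by_cases h1 : i = T a
    · subst h1; simp [hab]
    by_cases h2 : i = T b
    · subst h2; simp [hab]
    rw [Equiv.swap_apply_of_ne_of_ne h1 h2]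
  unfold spAnti
  rw [map_sum, ← Finset.sum_neg_distrib]
  refine Fintype.sum_equiv (Equiv.mulLeft (⟨_, hs⟩ : spCol n lam T)) _ _ ?_
  intro g
  have hT : T a ≠ T b := fun h => hne (T.injective h)
  simp [rename_rename, Equiv.Perm.sign_mul, Equiv.Perm.sign_swap hT, Equiv.Perm.coe_mul]

lemma spAnti_mult (n : ℕ) (lam : YoungDiagram) (T : lam.cells ≃ Fin n)
    (f : MvPolynomial (Fin n) ℂ) (hf : f.IsHomogeneous (spPairs lam).card) :
    ∃ c : ℂ, spAnti n lam T f = c • spechtPoly n lam T :=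
  spechtPoly_mult n lam T _ (spAnti_homog n lam T f _ hf) (spAnti_swap n lam T f)

/-- row exponent -/
def spExp (n : ℕ) (lam : YoungDiagram) (T : lam.cells ≃ Fin n) : Fin n →₀ ℕ :=
  Finsupp.equivFunOnFinite.symm (fun i => (T.symm i : ℕ × ℕ).1)

lemma spExp_degree (n : ℕ) (lam : YoungDiagram) (T : lam.cells ≃ Fin n) :
    (spExp n lam T).degree = (spPairs lam).card := by
  rw [Finsupp.degree_eq_sum]
  have h1 : ∑ i, spExp n lam T i = ∑ c : lam.cells, (c : ℕ × ℕ).1 :=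
    Fintype.sum_equiv T.symm _ _ (fun i => rfl)
  rw [h1, Finset.card_eq_sum_card_fiberwise (f := Prod.snd) (t := Finset.univ)
    (fun _ _ => Finset.mem_coe.2 (Finset.mem_univ _))]
  refine Finset.sum_congr rfl fun c _ => ?_
  conv_lhs => rw [← Finset.card_range (c : ℕ × ℕ).1]
  refine Finset.card_bij (fun i hi => ((⟨(i, (c : ℕ × ℕ).2), ?_⟩ : lam.cells), c)) ?_ ?_ ?_
  · exact lam.isLowerSet (a := (c : ℕ × ℕ))
      (Prod.mk_le_mk.2 ⟨(Finset.mem_range.1 hi).le, le_rfl⟩) c.2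
  · intro i hi
    simpa [spPairs] using hi
  · intro i hi j hj h
    simpa using h
  · rintro ⟨p, q⟩ h
    simp only [spPairs, Finset.mem_filter, Finset.mem_univ, true_and] at h
    obtain ⟨⟨h1, h2⟩, rfl⟩ := h
    refine ⟨(p : ℕ × ℕ).1, Finset.mem_range.2 h2, ?_⟩
    refine Prod.ext (Subtype.ext (Prod.ext rfl h1.symm)) rfl

lemma sp_coeff_rename {n : ℕ} (g : Equiv.Perm (Fin n)) (f : MvPolynomial (Fin n) ℂ)
    (m : Fin n →₀ ℕ) : coeff m (rename g f) = coeff (m.mapDomain (g⁻¹ : Equiv.Perm _)) f := by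
  conv_lhs => rw [show m = (m.mapDomain (g⁻¹ : Equiv.Perm _)).mapDomain g by
    rw [← Finsupp.mapDomain_comp, ← Equiv.Perm.coe_mul]; simp]
  exact coeff_rename_mapDomain g g.injective f _

lemma spAnti_exp_ne (n : ℕ) (lam : YoungDiagram) (T : lam.cells ≃ Fin n) :
    spAnti n lam T (monomial (spExp n lam T) 1) ≠ 0 := by
  intro h
  have h2 := congrArg (coeff (spExp n lam T)) h
  unfold spAnti at h2
  rw [coeff_sum, Finset.sum_eq_single 1] at h2
  · simp at h2
  · intro g _ hg
    rw [coeff_smul, rename_monomial, coeff_monomial, if_neg, smul_zero]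
    intro he
    apply hg
    apply Subtype.ext
    ext1 i
    have h3 := DFunLike.congr_fun he (g.1 i)
    rw [Finsupp.mapDomain_apply g.1.injective] at h3
    have h4 := g.2 i
    apply T.symm.injective
    apply Subtype.ext
    exact Prod.ext h3.symm h4
  · simp

/-- conjugate pairing -/
def spL {n : ℕ} (f : MvPolynomial (Fin n) ℂ) : MvPolynomial (Fin n) ℂ →ₗ[ℂ] ℂ :=
  ∑ m ∈ f.support, (starRingEnd ℂ (coeff m f)) • lcoeff ℂ m

lemma spL_apply {n : ℕ} (f h : MvPolynomial (Fin n) ℂ) :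
    spL f h = ∑ m ∈ f.support, starRingEnd ℂ (coeff m f) * coeff m h := by
  simp [spL, LinearMap.sum_apply]

lemma spL_monomial {n : ℕ} (f : MvPolynomial (Fin n) ℂ) (m : Fin n →₀ ℕ) :
    spL f (monomial m 1) = starRingEnd ℂ (coeff m f) := by
  rw [spL_apply]
  simp only [coeff_monomial, mul_ite, mul_one, mul_zero]
  rw [Finset.sum_ite_eq]
  split_ifs with h
  · rfl
  · rw [notMem_support_iff.1 h]; simp

lemma spL_self {n : ℕ} (f : MvPolynomial (Fin n) ℂ) (h : spL f f = 0) : f = 0 := by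
  rw [spL_apply] at h
  have h2 : ∑ m ∈ f.support, Complex.normSq (coeff m f) = 0 := by
    have : ((∑ m ∈ f.support, Complex.normSq (coeff m f) : ℝ) : ℂ) = 0 := by
      rw [← h]; push_cast
      exact Finset.sum_congr rfl fun m _ => Complex.normSq_eq_conj_mul_self
    exact_mod_cast this
  rw [Finset.sum_eq_zero_iff_of_nonneg (fun _ _ => Complex.normSq_nonneg _)] at h2
  ext m
  by_cases hm : m ∈ f.support
  · simpa using h2 m hm
  · simpa using hm

lemma spL_anti (n : ℕ) (lam : YoungDiagram) (T : lam.cells ≃ Fin n)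
    (f : MvPolynomial (Fin n) ℂ) (m : Fin n →₀ ℕ) :
    spL f (spAnti n lam T (monomial m 1)) = starRingEnd ℂ (coeff m (spAnti n lam T f)) := by
  unfold spAnti
  rw [map_sum, coeff_sum, map_sum]
  refine Fintype.sum_equiv (Equiv.inv _) _ _ ?_
  intro g
  rw [map_smul, rename_monomial, spL_monomial, coeff_smul, sp_coeff_rename]
  simp

/-- The Specht module `SP_λ`, with `S_n` acting by permuting the variables, is an
irreducible representation: it is nonzero and its only invariant subspaces are `0` and
`SP_λ` itself. -/
theorem spechtModule_irreducible (n : ℕ) (lam : YoungDiagram) (hlam : lam.card = n) :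
    spechtModule n lam ≠ ⊥ ∧
      ∀ W : Submodule ℂ (MvPolynomial (Fin n) ℂ), W ≤ spechtModule n lam →
        (∀ g : Equiv.Perm (Fin n), ∀ p ∈ W, MvPolynomial.rename g p ∈ W) →
        W = ⊥ ∨ W = spechtModule n lam := by
  have T0 : lam.cells ≃ Fin n := Fintype.equivFinOfCardEq (by simpa using hlam)
  refine ⟨?_, ?_⟩
  · intro h
    apply spechtPoly_ne_zero n lam T0
    rw [← Submodule.mem_bot ℂ, ← h]
    exact Submodule.subset_span ⟨T0, rfl⟩
  intro W hW hinv
  have hhom : ∀ f ∈ W, f.IsHomogeneous (spPairs lam).card := by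
    intro f hf
    have : spechtModule n lam ≤ homogeneousSubmodule (Fin n) ℂ (spPairs lam).card := by
      refine Submodule.span_le.2 ?_
      rintro _ ⟨T, rfl⟩
      exact spechtPoly_homog n lam T
    exact this (hW hf)
  by_cases hall : ∀ f ∈ W, ∀ T : lam.cells ≃ Fin n, spAnti n lam T f = 0
  · left
    rw [eq_bot_iff]
    intro f hf
    rw [Submodule.mem_bot]
    apply spL_self
    have : spechtModule n lam ≤ LinearMap.ker (spL f) := by
      refine Submodule.span_le.2 ?_
      rintro _ ⟨T, rfl⟩
      obtain ⟨c, hc⟩ := spAnti_mult n lam T (monomial (spExp n lam T) 1)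
        (isHomogeneous_monomial _ (spExp_degree n lam T))
      have h0 := spAnti_exp_ne n lam T
      have h1 := spL_anti n lam T f (spExp n lam T)
      rw [hall f hf T, hc] at h1
      rw [hc] at h0
      have hc0 : c ≠ 0 := by rintro rfl; simp at h0
      simpa [hc0] using h1
    exact this (hW hf)
  · right
    push Not at hall
    obtain ⟨f, hf, T, hne⟩ := hall
    apply le_antisymm hW
    have hA : spAnti n lam T f ∈ W :=
      Submodule.sum_mem _ fun g _ => W.smul_mem _ (hinv _ _ hf)
    obtain ⟨c, hc⟩ := spAnti_mult n lam T f (hhom f hf)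
    rw [hc] at hA hne
    have hc0 : c ≠ 0 := by rintro rfl; simp at hne
    have hT : spechtPoly n lam T ∈ W := (W.smul_mem_iff hc0).1 hA
    refine Submodule.span_le.2 ?_
    rintro _ ⟨T', rfl⟩
    have := hinv (T.symm.trans T') _ hT
    rw [spechtPoly_rename] at this
    have hT' : T.trans (T.symm.trans T') = T' := by ext x; simp
    rw [hT'] at this
    exact this

end
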